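/- Let f ∈ L¹(Ω,μ) and suppose there exists τ₀ > 0 such that τ+(x) < τ₀ and τ−(x) < τ₀ for every x ∈ Supp(f), where Supp(f) = Ω \ ω and ω is the maximal open subset of Ω on which f vanishes μ-almost everywhere. Then ∫_Ω f(x) dμ(x) = ∫_{Γ+} ( ∫_0^{τ−(y)} f(Φ(y,−s)) ds ) dμ+(y) = ∫_{Γ−} ( ∫_0^{τ+(y)} f(Φ(y,s)) ds ) dμ−(y). -/

import Mathlib

/-!
Write `L(y) = ∫_0^{τ₋(y)} f(Φ(y,-s)) ds`. A space-time trajectory ending at `y ∈ Γ₊` at time `t` is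
`s ↦ (Φ(y,-s), t - s)`, and along it the quantity `t + τ₊(x)` of the running point `(x,t)` is
constant, equal to the exit time. Hence, if `f` vanishes wherever `τ₊ ≥ τ₀`, the space-time formula
with `T = τ₀ + 1` applied to `h(x,t) = f(x) 1[τ₀ < t + τ₊(x) < τ₀ + 1]` gives the first identity.
For each `x` with `f x ≠ 0` the set of admissible `t` is an interval of length one inside `(0,T)`,
so the left side is `∫_Ω f`. At time `T` the cutoff vanishes, so there is no final-time term.
On the boundary the cutoff is `1[τ₀ < t]`, and for these `t` the truncation of the inner integral
at `min(τ₋(y), t)` is invisible, so the boundary term is `∫_{Γ₊} L dμ₊` integrated over a unit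
time interval. This is `outgoing_identity`.

The hypothesis bounds `τ₊` only on `Supp f`, and `f` may be nonzero on a `μ`-null subset of the
complement. Since `μ₊` is known only through the space-time formula, modifying `f` on a null set
could a priori change the boundary integral. By invariance of `μ` and Fubini, almost every
trajectory spends zero time in a given null set (`null_saturation`). On the remaining trajectories,
whose union is null and invariant, one may redefine `f` freely, and `exists_adapted` spreads the
exact value `L(y)` over a short interval before the exit point. The resulting representative has
the same integral as `f` on every single trajectory. The comparison of the boundary integrals is
therefore an equality of integrands, valid also for divergent integrals, which have the value `0`.

The incoming identity is the outgoing one for the reversed flow `Φ(x,-s)`, with `t` replaced by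
`T - t` in the space-time formula.
-/

open MeasureTheory Set Filter Topology
open scoped ENNReal NNReal

noncomputable section

/-- Forward exit time of the flow `Φ` from `Ω` (`∞` if the forward curve never leaves `Ω`). -/
def tauP {N : ℕ} (Ω : Set (Fin N → ℝ)) (Φ : (Fin N → ℝ) → ℝ → (Fin N → ℝ))
    (x : Fin N → ℝ) : ℝ≥0∞ :=
  sInf {s : ℝ≥0∞ | ∃ r : ℝ, 0 < r ∧ s = ENNReal.ofReal r ∧ Φ x r ∉ Ω}

/-- Backward exit time of the flow `Φ` from `Ω`. -/
def tauM {N : ℕ} (Ω : Set (Fin N → ℝ)) (Φ : (Fin N → ℝ) → ℝ → (Fin N → ℝ))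
    (x : Fin N → ℝ) : ℝ≥0∞ :=
  sInf {s : ℝ≥0∞ | ∃ r : ℝ, 0 < r ∧ s = ENNReal.ofReal r ∧ Φ x (-r) ∉ Ω}

/-- `∫_0^τ g(s) ds`, over `(0,∞)` when `τ = ∞`. -/
def curveInt (g : ℝ → ℝ) (τ : ℝ≥0∞) : ℝ :=
  ∫ s in {s : ℝ | 0 < s ∧ ENNReal.ofReal s < τ}, g s

/-- The incoming part `Γ₋` of the boundary `∂Ω`. -/
def GammaM {N : ℕ} (Ω : Set (Fin N → ℝ)) (Φ : (Fin N → ℝ) → ℝ → (Fin N → ℝ)) :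
    Set (Fin N → ℝ) :=
  {y ∈ frontier Ω | ∃ x ∈ Ω, tauM Ω Φ x < ⊤ ∧ y = Φ x (-(tauM Ω Φ x).toReal)}

/-- The outgoing part `Γ₊` of the boundary `∂Ω`. -/
def GammaP {N : ℕ} (Ω : Set (Fin N → ℝ)) (Φ : (Fin N → ℝ) → ℝ → (Fin N → ℝ)) :
    Set (Fin N → ℝ) :=
  {y ∈ frontier Ω | ∃ x ∈ Ω, tauP Ω Φ x < ⊤ ∧ y = Φ x ((tauP Ω Φ x).toReal)}

/-- The boundary measures `μ∓` satisfy the integration-along-characteristics identities. -/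
def IsBoundaryMeasures {N : ℕ} (Ω : Set (Fin N → ℝ)) (Φ : (Fin N → ℝ) → ℝ → (Fin N → ℝ))
    (μ μm μp : Measure (Fin N → ℝ)) : Prop :=
  ∀ f : (Fin N → ℝ) → ℝ, Integrable f (μ.restrict Ω) →
    (∫ x in {x ∈ Ω | tauM Ω Φ x < ⊤}, f x ∂μ
        = ∫ y in GammaM Ω Φ, curveInt (fun s => f (Φ y s)) (tauP Ω Φ y) ∂μm) ∧
    (∫ x in {x ∈ Ω | tauP Ω Φ x < ⊤}, f x ∂μ
        = ∫ y in GammaP Ω Φ, curveInt (fun s => f (Φ y (-s))) (tauM Ω Φ y) ∂μp)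

/-- The identities of Lemma `defmu+-` (beals1 and beals2). -/
def BealsProperty {N : ℕ} (Ω : Set (Fin N → ℝ)) (Φ : (Fin N → ℝ) → ℝ → (Fin N → ℝ))
    (μ μm μp : Measure (Fin N → ℝ)) : Prop :=
  ∀ T : ℝ, 0 < T → ∀ f : ((Fin N → ℝ) × ℝ) → ℝ,
    Integrable f ((μ.restrict Ω).prod (volume.restrict (Ioo (0 : ℝ) T))) →
    (∫ p, f p ∂((μ.restrict Ω).prod (volume.restrict (Ioo (0 : ℝ) T)))
        = (∫ t in Ioo (0 : ℝ) T, (∫ y in GammaP Ω Φ,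
            (∫ s in Ioo (0 : ℝ) ((tauM Ω Φ y ⊓ ENNReal.ofReal t).toReal),
              f (Φ y (-s), t - s)) ∂μp))
          + ∫ x in Ω, (∫ s in Ioo (0 : ℝ) ((tauM Ω Φ x ⊓ ENNReal.ofReal T).toReal),
              f (Φ x (-s), T - s)) ∂μ)
    ∧ (∫ p, f p ∂((μ.restrict Ω).prod (volume.restrict (Ioo (0 : ℝ) T)))
        = (∫ t in Ioo (0 : ℝ) T, (∫ y in GammaM Ω Φ,
            (∫ s in Ioo (0 : ℝ) ((tauP Ω Φ y ⊓ ENNReal.ofReal (T - t)).toReal),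
              f (Φ y s, t + s)) ∂μm))
          + ∫ x in Ω, (∫ s in Ioo (0 : ℝ) ((tauP Ω Φ x ⊓ ENNReal.ofReal T).toReal),
              f (Φ x s, s)) ∂μ)

/-- The class `𝔜` of test functions, together with the derivative `Dψ` along the flow. -/
structure IsTestFun {N : ℕ} (Ω : Set (Fin N → ℝ)) (Φ : (Fin N → ℝ) → ℝ → (Fin N → ℝ))
    (ψ Dψ : (Fin N → ℝ) → ℝ) : Prop where
  measurable : Measurable ψ
  bounded : ∃ C, ∀ x, |ψ x| ≤ C
  compact_support : ∃ K : Set (Fin N → ℝ), IsCompact K ∧ K ⊆ Ω ∧ ∀ x ∉ K, ψ x = 0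
  smooth : ∀ x ∈ Ω, ContDiffOn ℝ 1 (fun s => ψ (Φ x s))
      {s : ℝ | ENNReal.ofReal s < tauP Ω Φ x ∧ ENNReal.ofReal (-s) < tauM Ω Φ x}
  hasDeriv : ∀ x ∈ Ω, HasDerivAt (fun s => ψ (Φ x s)) (Dψ x) 0
  measurableD : Measurable Dψ
  boundedD : ∃ C, ∀ x, |Dψ x| ≤ C

/-- `f ∈ D(T_max)` with `T_max f = g`. -/
def InDomTmax {N : ℕ} (Ω : Set (Fin N → ℝ)) (Φ : (Fin N → ℝ) → ℝ → (Fin N → ℝ))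
    (μ : Measure (Fin N → ℝ)) (f g : (Fin N → ℝ) → ℝ) : Prop :=
  Integrable f (μ.restrict Ω) ∧ Integrable g (μ.restrict Ω) ∧
    ∀ ψ Dψ : (Fin N → ℝ) → ℝ, IsTestFun Ω Φ ψ Dψ →
      ∫ x in Ω, g x * ψ x ∂μ = ∫ x in Ω, f x * Dψ x ∂μ

/-- A sequence of one-dimensional mollifiers supported in `[0, 1/n]`. -/
def IsMollifier (ρ : ℕ → ℝ → ℝ) : Prop :=
  ∀ n : ℕ, ContDiff ℝ (⊤ : ℕ∞) (ρ n) ∧ (∀ s, 0 ≤ ρ n s) ∧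
    (∀ s, s ∉ Icc (0 : ℝ) (1 / (n + 1 : ℝ)) → ρ n s = 0) ∧ (∫ s, ρ n s) = 1

/-- Mollification along the characteristic curves. -/
def moll {N : ℕ} (Ω : Set (Fin N → ℝ)) (Φ : (Fin N → ℝ) → ℝ → (Fin N → ℝ))
    (ρ : ℝ → ℝ) (f : (Fin N → ℝ) → ℝ) (x : Fin N → ℝ) : ℝ :=
  curveInt (fun s => ρ s * f (Φ x (-s))) (tauM Ω Φ x)

/-- The lifted flow `Ψ(ξ,s) = (Φ(ξ₁,s), ξ₂+s)` on `Ω × (0,T)`. -/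
def lflow {N : ℕ} (Φ : (Fin N → ℝ) → ℝ → (Fin N → ℝ)) (ξ : (Fin N → ℝ) × ℝ) (s : ℝ) :
    (Fin N → ℝ) × ℝ := (Φ ξ.1 s, ξ.2 + s)

/-- Forward exit time `ℓ₊` of the lifted flow. -/
def ellP {N : ℕ} (Ω : Set (Fin N → ℝ)) (Φ : (Fin N → ℝ) → ℝ → (Fin N → ℝ)) (T : ℝ)
    (ξ : (Fin N → ℝ) × ℝ) : ℝ≥0∞ := tauP Ω Φ ξ.1 ⊓ ENNReal.ofReal (T - ξ.2)

/-- Backward exit time `ℓ₋` of the lifted flow. -/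
def ellM {N : ℕ} (Ω : Set (Fin N → ℝ)) (Φ : (Fin N → ℝ) → ℝ → (Fin N → ℝ))
    (ξ : (Fin N → ℝ) × ℝ) : ℝ≥0∞ := tauM Ω Φ ξ.1 ⊓ ENNReal.ofReal ξ.2

/-- The incoming part `Σ₋,T` of the boundary of `Ω × (0,T)`. -/
def SigmaM {N : ℕ} (Ω : Set (Fin N → ℝ)) (Φ : (Fin N → ℝ) → ℝ → (Fin N → ℝ)) (T : ℝ) :
    Set ((Fin N → ℝ) × ℝ) :=
  {ζ ∈ frontier (Ω ×ˢ Ioo (0 : ℝ) T) |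
    ∃ ξ ∈ Ω ×ˢ Ioo (0 : ℝ) T, ζ = lflow Φ ξ (-(ellM Ω Φ ξ).toReal)}

/-- The outgoing part `Σ₊,T` of the boundary of `Ω × (0,T)`. -/
def SigmaP {N : ℕ} (Ω : Set (Fin N → ℝ)) (Φ : (Fin N → ℝ) → ℝ → (Fin N → ℝ)) (T : ℝ) :
    Set ((Fin N → ℝ) × ℝ) :=
  {ζ ∈ frontier (Ω ×ˢ Ioo (0 : ℝ) T) |
    ∃ ξ ∈ Ω ×ˢ Ioo (0 : ℝ) T, ζ = lflow Φ ξ ((ellP Ω Φ T ξ).toReal)}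

/-- The semigroup `U₀(t)` with no re-entry boundary conditions. -/
def U0 {N : ℕ} (Ω : Set (Fin N → ℝ)) (Φ : (Fin N → ℝ) → ℝ → (Fin N → ℝ)) (t : ℝ)
    (f : (Fin N → ℝ) → ℝ) (x : Fin N → ℝ) : ℝ :=
  if ENNReal.ofReal t < tauM Ω Φ x then f (Φ x (-t)) else 0

/-- `x ↦ ∫_0^{τ₋(x)} e^{-λ t} g(Φ(x,-t)) dt`. -/
def resolv {N : ℕ} (Ω : Set (Fin N → ℝ)) (Φ : (Fin N → ℝ) → ℝ → (Fin N → ℝ)) (lam : ℝ)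
    (g : (Fin N → ℝ) → ℝ) (x : Fin N → ℝ) : ℝ :=
  curveInt (fun t => Real.exp (-(lam * t)) * g (Φ x (-t))) (tauM Ω Φ x)

/-- The candidate solution of the boundary value problem `(λ - T_max) f = g`, `B⁻ f = u`. -/
def bvpSol {N : ℕ} (Ω : Set (Fin N → ℝ)) (Φ : (Fin N → ℝ) → ℝ → (Fin N → ℝ)) (lam : ℝ)
    (g u : (Fin N → ℝ) → ℝ) (x : Fin N → ℝ) : ℝ :=
  resolv Ω Φ lam g x +
    (if tauM Ω Φ x < ⊤ then
      Real.exp (-(lam * (tauM Ω Φ x).toReal)) * u (Φ x (-(tauM Ω Φ x).toReal)) else 0)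

/-- `f` has incoming trace `u` on `Γ₋`, via an absolutely continuous representative
(along the characteristics, with derivative `-g`). -/
def IsTraceM {N : ℕ} (Ω : Set (Fin N → ℝ)) (Φ : (Fin N → ℝ) → ℝ → (Fin N → ℝ))
    (μ μm : Measure (Fin N → ℝ)) (f g u : (Fin N → ℝ) → ℝ) : Prop :=
  ∃ fs : (Fin N → ℝ) → ℝ, fs =ᵐ[μ.restrict Ω] f ∧
    (∀ᵐ x ∂μ.restrict Ω, ∀ t₁ t₂ : ℝ, t₁ ≤ t₂ →
      ENNReal.ofReal (-t₁) < tauM Ω Φ x → ENNReal.ofReal t₂ < tauP Ω Φ x →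
      fs (Φ x t₁) - fs (Φ x t₂) = ∫ s in t₁..t₂, g (Φ x s)) ∧
    ∀ᵐ y ∂μm.restrict (GammaM Ω Φ),
      Tendsto (fun t => fs (Φ y t)) (𝓝[>] (0 : ℝ)) (𝓝 (u y))

/-- `f` has outgoing trace `w` on `Γ₊`. -/
def IsTraceP {N : ℕ} (Ω : Set (Fin N → ℝ)) (Φ : (Fin N → ℝ) → ℝ → (Fin N → ℝ))
    (μ μp : Measure (Fin N → ℝ)) (f g w : (Fin N → ℝ) → ℝ) : Prop :=
  ∃ fs : (Fin N → ℝ) → ℝ, fs =ᵐ[μ.restrict Ω] f ∧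
    (∀ᵐ x ∂μ.restrict Ω, ∀ t₁ t₂ : ℝ, t₁ ≤ t₂ →
      ENNReal.ofReal (-t₁) < tauM Ω Φ x → ENNReal.ofReal t₂ < tauP Ω Φ x →
      fs (Φ x t₁) - fs (Φ x t₂) = ∫ s in t₁..t₂, g (Φ x s)) ∧
    ∀ᵐ y ∂μp.restrict (GammaP Ω Φ),
      Tendsto (fun t => fs (Φ y (-t))) (𝓝[>] (0 : ℝ)) (𝓝 (w y))

/-! ### The flow and its exit times -/

section Flow

variable {N : ℕ}

lemma flow_add (κ : ℝ≥0) (F : (Fin N → ℝ) → (Fin N → ℝ)) (hF : LipschitzWith κ F)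
    (Φ : (Fin N → ℝ) → ℝ → (Fin N → ℝ)) (hΦ0 : ∀ x, Φ x 0 = x)
    (hΦ' : ∀ x s, HasDerivAt (Φ x) (F (Φ x s)) s) (x : Fin N → ℝ) (a b : ℝ) :
    Φ (Φ x a) b = Φ x (a + b) := by
  have h : Φ (Φ x a) = fun b => Φ x (a + b) := by
    refine ODE_solution_unique_univ (v := fun _ => F) (s := fun _ => univ) (K := κ) (t₀ := 0)
      (fun _ => hF.lipschitzOnWith) (fun t => ⟨hΦ' _ t, trivial⟩)
      (fun t => ⟨(hΦ' x (a + t)).comp_const_add a t, trivial⟩) ?_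
    simp [hΦ0]
  exact congrFun h b

/-- Gronwall's inequality: on a bounded time interval the flow is uniformly Lipschitz in `x`. -/
lemma flow_lipschitz (κ : ℝ≥0) (F : (Fin N → ℝ) → (Fin N → ℝ)) (hF : LipschitzWith κ F)
    (Φ : (Fin N → ℝ) → ℝ → (Fin N → ℝ)) (hΦ0 : ∀ x, Φ x 0 = x)
    (hΦ' : ∀ x s, HasDerivAt (Φ x) (F (Φ x s)) s) (R s : ℝ) (h0 : 0 ≤ s) (hR : s ≤ R) :
    LipschitzWith (Real.exp (κ * R)).toNNReal (fun x => Φ x s) := by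
  refine LipschitzWith.of_dist_le_mul fun x y => ?_
  have h := dist_le_of_trajectories_ODE (v := fun _ => F) (K := κ) (f := Φ x) (g := Φ y)
    (a := 0) (b := R) (δ := dist x y) (fun _ => hF)
    (fun t _ => (hΦ' x t).continuousAt.continuousWithinAt)
    (fun t _ => (hΦ' x t).hasDerivWithinAt)
    (fun t _ => (hΦ' y t).continuousAt.continuousWithinAt)
    (fun t _ => (hΦ' y t).hasDerivWithinAt) (by simp [hΦ0]) s ⟨h0, hR⟩
  rw [Real.coe_toNNReal _ (Real.exp_pos _).le, mul_comm]
  refine h.trans (mul_le_mul_of_nonneg_left (Real.exp_le_exp.2 ?_) dist_nonneg)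
  rw [sub_zero]
  exact mul_le_mul_of_nonneg_left hR κ.2

lemma flow_reverse_deriv (F : (Fin N → ℝ) → (Fin N → ℝ))
    (Φ : (Fin N → ℝ) → ℝ → (Fin N → ℝ))
    (hΦ' : ∀ x s, HasDerivAt (Φ x) (F (Φ x s)) s) (x : Fin N → ℝ) (s : ℝ) :
    HasDerivAt (fun s => Φ x (-s)) (-F (Φ x (-s))) s := by
  have h := (hΦ' x (-s)).scomp s (hasDerivAt_neg s)
  rw [neg_one_smul] at h
  exact h

lemma flow_continuous (κ : ℝ≥0) (F : (Fin N → ℝ) → (Fin N → ℝ)) (hF : LipschitzWith κ F)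
    (Φ : (Fin N → ℝ) → ℝ → (Fin N → ℝ)) (hΦ0 : ∀ x, Φ x 0 = x)
    (hΦ' : ∀ x s, HasDerivAt (Φ x) (F (Φ x s)) s) :
    Continuous (fun p : (Fin N → ℝ) × ℝ => Φ p.1 p.2) := by
  have hF' : LipschitzWith κ (fun x => -F x) := hF.neg
  rw [continuous_iff_continuousAt]
  rintro ⟨x, s⟩
  have hs : s ∈ Ioo (-(|s| + 1)) (|s| + 1) := abs_lt.1 (lt_add_one _)
  have h := continuousOn_prod_of_continuousOn_lipschitzOnWith
    (fun p : (Fin N → ℝ) × ℝ => Φ p.1 p.2) (s := univ) (t := Ioo (-(|s| + 1)) (|s| + 1))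
    (Real.exp (κ * (|s| + 1))).toNNReal
    (fun a _ b _ => (hΦ' a b).continuousAt.continuousWithinAt) (fun b hb => by
      rcases le_total 0 b with h | h
      · exact (flow_lipschitz κ F hF Φ hΦ0 hΦ' _ b h hb.2.le).lipschitzOnWith
      · have := flow_lipschitz κ (fun x => -F x) hF' (fun x s => Φ x (-s)) (by simpa using hΦ0)
          (flow_reverse_deriv F Φ hΦ') (|s| + 1) (-b) (by linarith) (by linarith [hb.1])
        exact (by simpa using this : LipschitzWith _ (fun x => Φ x b)).lipschitzOnWith)
  exact h.continuousAt ((isOpen_univ.prod isOpen_Ioo).mem_nhds ⟨trivial, hs⟩)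

variable {Ω : Set (Fin N → ℝ)} {Φ : (Fin N → ℝ) → ℝ → (Fin N → ℝ)}

lemma le_tauP {x : Fin N → ℝ} {a : ℝ≥0∞}
    (h : ∀ r : ℝ, 0 < r → ENNReal.ofReal r < a → Φ x r ∈ Ω) : a ≤ tauP Ω Φ x := by
  refine le_sInf ?_
  rintro _ ⟨r, hr, rfl, hx⟩
  by_contra hlt
  exact hx (h r hr (not_le.1 hlt))

lemma tauP_le {x : Fin N → ℝ} {r : ℝ} (hr : 0 < r) (h : Φ x r ∉ Ω) :
    tauP Ω Φ x ≤ ENNReal.ofReal r :=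
  sInf_le ⟨r, hr, rfl, h⟩

lemma tauM_le {x : Fin N → ℝ} {r : ℝ} (hr : 0 < r) (h : Φ x (-r) ∉ Ω) :
    tauM Ω Φ x ≤ ENNReal.ofReal r :=
  sInf_le ⟨r, hr, rfl, h⟩

lemma mem_of_lt_tauM {y : Fin N → ℝ} {s : ℝ} (hs : 0 < s) (h : ENNReal.ofReal s < tauM Ω Φ y) :
    Φ y (-s) ∈ Ω := by
  by_contra hn
  exact absurd (tauM_le hs hn) (not_le.2 h)

lemma le_tauP_backward (hadd : ∀ x a b, Φ (Φ x a) b = Φ x (a + b)) {y : Fin N → ℝ} {s : ℝ}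
    (h : ENNReal.ofReal s < tauM Ω Φ y) :
    ENNReal.ofReal s ≤ tauP Ω Φ (Φ y (-s)) := by
  refine le_tauP fun r hr hrs => ?_
  have hrs' : r < s := (ENNReal.ofReal_lt_ofReal_iff_of_nonneg hr.le).1 hrs
  rw [hadd, show -s + r = -(s - r) by ring]
  exact mem_of_lt_tauM (by linarith)
    ((ENNReal.ofReal_le_ofReal (by linarith)).trans_lt h)

lemma tauP_backward (hΦ0 : ∀ x, Φ x 0 = x) (hadd : ∀ x a b, Φ (Φ x a) b = Φ x (a + b))
    {y : Fin N → ℝ} (hy : y ∉ Ω) {s : ℝ} (hs : 0 < s)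
    (h : ENNReal.ofReal s < tauM Ω Φ y) :
    tauP Ω Φ (Φ y (-s)) = ENNReal.ofReal s := by
  refine le_antisymm (tauP_le hs ?_) (le_tauP_backward hadd h)
  rw [hadd]
  simpa [hΦ0] using hy

/-- On the open set `Ω`, the exit time is lower semicontinuous: a compact piece of trajectory
inside `Ω` stays inside `Ω` under perturbation of its starting point. -/
lemma measurable_tauP (hΩ : IsOpen Ω) (hΦ0 : ∀ x, Φ x 0 = x)
    (hc : Continuous (fun p : (Fin N → ℝ) × ℝ => Φ p.1 p.2)) :
    Measurable (Ω.indicator (tauP Ω Φ)) := by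
  refine measurable_of_Ioi fun a => ?_
  induction a using ENNReal.recTopCoe with
  | top => simp
  | coe a =>
    have : Ω.indicator (tauP Ω Φ) ⁻¹' Ioi (a : ℝ≥0∞)
        = {x | ∀ r ∈ Icc (0 : ℝ) a, Φ x r ∈ Ω} := by
      ext x
      simp only [mem_preimage, mem_Ioi, mem_ofPred_eq]
      constructor
      · intro h r hr
        have hx : x ∈ Ω := by
          by_contra hx
          simp [hx] at h
        rw [indicator_of_mem hx] at h
        rcases hr.1.eq_or_lt with h0 | h0
        · rwa [← h0, hΦ0]
        · by_contra hn
          refine absurd (tauP_le h0 hn)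
            (not_le.2 (lt_of_le_of_lt ?_ h))
          exact ENNReal.ofReal_le_of_le_toReal hr.2
      · intro h
        have hx : x ∈ Ω := by simpa [hΦ0] using h 0 ⟨le_rfl, a.2⟩
        rw [indicator_of_mem hx]
        -- `Ω` being open, the trajectory stays inside for some time beyond `a`.
        have hev : ∀ᶠ r in 𝓝 (a : ℝ), Φ x r ∈ Ω :=
          (hc.comp (Continuous.prodMk_right x)).continuousAt.eventually_mem
            (hΩ.mem_nhds (h a ⟨a.2, le_rfl⟩))
        obtain ⟨ε, hε, hball⟩ := Metric.eventually_nhds_iff.1 hev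
        have hlt : (a : ℝ≥0∞) < ENNReal.ofReal (a + ε) := by
          rw [← ENNReal.ofReal_coe_nnreal]
          exact (ENNReal.ofReal_lt_ofReal_iff_of_nonneg a.2).2 (lt_add_of_pos_right _ hε)
        refine hlt.trans_le (le_tauP fun r hr hra => ?_)
        have hra' := (ENNReal.ofReal_lt_ofReal_iff_of_nonneg hr.le).1 hra
        rcases le_or_gt r a with h' | h'
        · exact h r ⟨hr.le, h'⟩
        · exact hball (by rw [Real.dist_eq, abs_lt]; constructor <;> linarith)
    rw [this]
    refine IsOpen.measurableSet (isOpen_iff_mem_nhds.2 fun x hx => ?_)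
    exact isCompact_Icc.eventually_forall_of_forall_eventually
      (P := fun x r => Φ x r ∈ Ω) fun r hr =>
        hc.continuousAt.eventually_mem (hΩ.mem_nhds (hx r hr))

/-! ### Null sets along trajectories -/

/-- Almost every trajectory spends zero time in a given null set. The set of exceptional `x`
is invariant under the flow. -/
lemma null_saturation (μ : Measure (Fin N → ℝ)) [IsFiniteMeasureOnCompacts μ]
    (hinv : ∀ (A : Set (Fin N → ℝ)) (t : ℝ), MeasurableSet A →
      μ ((fun x => Φ x t) '' A) = μ A)
    (hΦ0 : ∀ x, Φ x 0 = x) (hadd : ∀ x a b, Φ (Φ x a) b = Φ x (a + b))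
    (hc : Continuous (fun p : (Fin N → ℝ) × ℝ => Φ p.1 p.2))
    {A : Set (Fin N → ℝ)} (hA : MeasurableSet A) (hA0 : μ A = 0) :
    ∀ᵐ x ∂μ, volume {s : ℝ | Φ x s ∈ A} = 0 := by
  refine Measure.measure_ae_null_of_prod_null
    (s := (fun p : (Fin N → ℝ) × ℝ => Φ p.1 p.2) ⁻¹' A) ?_
  rw [Measure.prod_apply_symm (hc.measurable hA), lintegral_eq_zero_of_ae_eq_zero]
  refine Eventually.of_forall fun s => ?_
  have : (fun x => (x, s)) ⁻¹' ((fun p : (Fin N → ℝ) × ℝ => Φ p.1 p.2) ⁻¹' A)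
      = (fun x => Φ x (-s)) '' A := by
    ext x
    constructor
    · intro hx
      exact ⟨Φ x s, hx, by simp [hadd, hΦ0]⟩
    · rintro ⟨z, hz, rfl⟩
      simpa [hadd, hΦ0] using hz
  simp [this, hinv A _ hA, hA0]

lemma volume_flow_null_iff (hadd : ∀ x a b, Φ (Φ x a) b = Φ x (a + b)) (A : Set (Fin N → ℝ))
    (x : Fin N → ℝ) (a : ℝ) :
    volume {s : ℝ | Φ (Φ x a) s ∈ A} = volume {s : ℝ | Φ x s ∈ A} := by
  simp_rw [hadd]
  exact measure_preimage_add volume a {s : ℝ | Φ x s ∈ A}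

/-- Outside `Supp f`, the function `f` vanishes almost everywhere on `Ω`, by Lindelöf. -/
lemma ae_zero_off_support (μ : Measure (Fin N → ℝ)) (f : (Fin N → ℝ) → ℝ) :
    μ ({x | f x ≠ 0} ∩ ⋃₀ {U : Set (Fin N → ℝ) |
        IsOpen U ∧ U ⊆ Ω ∧ ∀ᵐ y ∂μ.restrict U, f y = 0}) = 0 := by
  obtain ⟨T, hT, hTS, hU⟩ := TopologicalSpace.isOpen_sUnion_countable
    {U : Set (Fin N → ℝ) | IsOpen U ∧ U ⊆ Ω ∧ ∀ᵐ y ∂μ.restrict U, f y = 0} (fun _ h => h.1)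
  rw [← hU, sUnion_eq_biUnion, inter_iUnion₂, measure_biUnion_null_iff hT]
  intro U hUT
  obtain ⟨ho, -, h0⟩ := hTS hUT
  rw [ae_iff, Measure.restrict_apply' ho.measurableSet] at h0
  exact h0

/-! ### A representative of `f` adapted to the trajectories -/

lemma curveInt_eq_Ioo {g : ℝ → ℝ} {τ : ℝ≥0∞} (hτ : τ ≠ ⊤) :
    curveInt g τ = ∫ s in Ioo (0 : ℝ) τ.toReal, g s := by
  have : {s : ℝ | 0 < s ∧ ENNReal.ofReal s < τ} = Ioo (0 : ℝ) τ.toReal := by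
    ext s
    exact and_congr_right fun _ => ENNReal.ofReal_lt_iff_lt_toReal (by positivity) hτ
  rw [curveInt, this]

lemma measurableSet_curve (τ : ℝ≥0∞) : MeasurableSet {s : ℝ | 0 < s ∧ ENNReal.ofReal s < τ} :=
  measurableSet_Ioi.inter (measurableSet_lt ENNReal.measurable_ofReal measurable_const)

end Flow

section Core

variable {N : ℕ} {Ω : Set (Fin N → ℝ)} {Φ : (Fin N → ℝ) → ℝ → (Fin N → ℝ)}

/-- A representative `w` of `f` which lives within forward time `τ₀` of the outgoing boundary and
has *exactly* the same integral as `f` along *every* trajectory ending outside `Ω`. No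
measurability or integrability along the trajectories is claimed: on the exceptional trajectories,
whose union is `μ`-null, `w` is a constant spread over a time interval of length at most `τ₀`,
chosen to have integral `curveInt`. -/
lemma exists_adapted (μ : Measure (Fin N → ℝ)) [IsFiniteMeasureOnCompacts μ]
    (hinv : ∀ (A : Set (Fin N → ℝ)) (t : ℝ), MeasurableSet A →
      μ ((fun x => Φ x t) '' A) = μ A)
    (hΦ0 : ∀ x, Φ x 0 = x) (hadd : ∀ x a b, Φ (Φ x a) b = Φ x (a + b))
    (hc : Continuous (fun p : (Fin N → ℝ) × ℝ => Φ p.1 p.2))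
    (f : (Fin N → ℝ) → ℝ) (τ₀ : ℝ) (hτ₀ : 0 < τ₀)
    (hsupp : ∀ x ∈ Ω \ ⋃₀ {U : Set (Fin N → ℝ) |
        IsOpen U ∧ U ⊆ Ω ∧ ∀ᵐ y ∂μ.restrict U, f y = 0},
      tauP Ω Φ x < ENNReal.ofReal τ₀) :
    ∃ w : (Fin N → ℝ) → ℝ, w =ᵐ[μ.restrict Ω] f ∧
      (∀ x ∈ Ω, w x ≠ 0 → tauP Ω Φ x < ENNReal.ofReal τ₀) ∧
      ∀ y ∉ Ω, ∀ t, τ₀ ≤ t →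
        ∫ s in Ioo (0 : ℝ) (tauM Ω Φ y ⊓ ENNReal.ofReal t).toReal, w (Φ y (-s))
          = curveInt (fun s => f (Φ y (-s))) (tauM Ω Φ y) := by
  classical
  obtain ⟨A, hsub, hA, hA0⟩ := exists_measurable_superset_of_null
    (ae_zero_off_support (Ω := Ω) μ f)
  have hfA : ∀ x ∈ Ω, x ∉ A → f x ≠ 0 → tauP Ω Φ x < ENNReal.ofReal τ₀ :=
    fun x hx hxA hfx => hsupp x ⟨hx, fun hU => hxA (hsub ⟨hfx, hU⟩)⟩
  let D : Set (Fin N → ℝ) := {x | volume {s : ℝ | Φ x s ∈ A} ≠ 0}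
  have hD : ∀ᵐ x ∂μ, x ∉ D := by
    filter_upwards [null_saturation μ hinv hΦ0 hadd hc hA hA0] with x hx
    exact fun h => h hx
  let m : (Fin N → ℝ) → ℝ≥0∞ := fun y => tauM Ω Φ y ⊓ ENNReal.ofReal τ₀
  let v : (Fin N → ℝ) → ℝ := fun y => curveInt (fun s => f (Φ y (-s))) (tauM Ω Φ y)
  let e : (Fin N → ℝ) → (Fin N → ℝ) := fun x => Φ x (tauP Ω Φ x).toReal
  let q : (Fin N → ℝ) → ℝ := fun x =>
    if tauP Ω Φ x < m (e x) then v (e x) / (m (e x)).toReal else 0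
  refine ⟨fun x => if x ∈ D then q x else if x ∈ A then 0 else f x, ?_, ?_, ?_⟩
  · refine ae_restrict_of_ae ?_
    filter_upwards [hD, measure_eq_zero_iff_ae_notMem.1 hA0] with x h1 h2
    simp [h1, h2]
  · intro x hx hw
    dsimp only at hw
    split_ifs at hw with h1 h2
    · simp only [q] at hw
      split_ifs at hw with h3
      · exact h3.trans_le inf_le_right
      · exact absurd rfl hw
    · exact absurd rfl hw
    · exact hfA x hx h2 hw
  · intro y hy t ht
    have hτt : ENNReal.ofReal τ₀ ≤ ENNReal.ofReal t := ENNReal.ofReal_le_ofReal ht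
    have hne : tauM Ω Φ y ⊓ ENNReal.ofReal t ≠ ⊤ :=
      (inf_le_right.trans_lt ENNReal.ofReal_lt_top).ne
    have hDy : ∀ s, Φ y (-s) ∈ D ↔ y ∈ D := fun s => by
      simp only [D, Set.mem_ofPred_eq, volume_flow_null_iff hadd A y (-s)]
    rw [← curveInt_eq_Ioo hne]
    by_cases hyD : y ∈ D
    · simp only [hDy, hyD, if_true]
      have hm : m y ≠ ⊤ := (inf_le_right.trans_lt ENNReal.ofReal_lt_top).ne
      have hmt : m y ≤ tauM Ω Φ y ⊓ ENNReal.ofReal t := inf_le_inf_left _ hτt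
      have hq : ∀ s ∈ {s : ℝ | 0 < s ∧ ENNReal.ofReal s < tauM Ω Φ y ⊓ ENNReal.ofReal t},
          q (Φ y (-s)) = {s : ℝ | 0 < s ∧ ENNReal.ofReal s < m y}.indicator
            (fun _ => v y / (m y).toReal) s := by
        rintro s ⟨hs, hst⟩
        have h1 := tauP_backward hΦ0 hadd hy hs (hst.trans_le inf_le_left)
        have h2 : e (Φ y (-s)) = y := by
          simp only [e, h1, ENNReal.toReal_ofReal hs.le, hadd]
          simp [hΦ0]
        simp only [q, h1, h2, indicator_apply, Set.mem_ofPred_eq, hs, true_and]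
      have hms : {s : ℝ | 0 < s ∧ ENNReal.ofReal s < m y} ⊆
          {s : ℝ | 0 < s ∧ ENNReal.ofReal s < tauM Ω Φ y ⊓ ENNReal.ofReal t} :=
        fun s hs => ⟨hs.1, hs.2.trans_le hmt⟩
      rw [curveInt, setIntegral_congr_fun (measurableSet_curve _) hq,
        setIntegral_indicator (measurableSet_curve _),
        inter_eq_self_of_subset_right hms]
      change curveInt (fun _ => v y / (m y).toReal) (m y) = v y
      rw [curveInt_eq_Ioo hm]
      rcases eq_or_ne (m y).toReal 0 with h0 | h0
      · -- A trajectory of zero length carries no integral.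
        have h1 : tauM Ω Φ y = 0 := by
          rcases (ENNReal.toReal_eq_zero_iff _).1 h0 with h | h
          · rcases min_eq_iff.1 h with h | h
            · exact h.1
            · exact absurd h.1 (by simpa using hτ₀)
          · exact absurd h hm
        simp [h0, v, h1, curveInt]
      · simp only [setIntegral_const, smul_eq_mul, Measure.real, Real.volume_Ioo, sub_zero,
          ENNReal.toReal_ofReal ENNReal.toReal_nonneg]
        field_simp
    · simp only [hDy, hyD, if_false]
      have hA' : ∀ᵐ s : ℝ, Φ y (-s) ∉ A := by
        have h1 : volume {s : ℝ | Φ y s ∈ A} = 0 := by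
          by_contra h
          exact hyD h
        have h2 := (Measure.measurePreserving_neg (volume : Measure ℝ)).quasiMeasurePreserving.ae
          (measure_eq_zero_iff_ae_notMem.1 h1)
        exact h2
      rw [curveInt, curveInt, ← integral_indicator (measurableSet_curve _),
        ← integral_indicator (measurableSet_curve _)]
      refine integral_congr_ae ?_
      filter_upwards [hA'] with s hsA
      simp only [indicator_apply, Set.mem_ofPred_eq, hsA, if_false]
      by_cases h1 : 0 < s ∧ ENNReal.ofReal s < tauM Ω Φ y
      · rw [if_pos h1]
        split_ifs with h2
        · rfl
        · -- Beyond time `t ≥ τ₀` before the exit, the trajectory has left `Supp f`.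
          by_contra h3
          have h4 := hfA _ (mem_of_lt_tauM h1.1 h1.2) hsA (Ne.symm h3)
          rw [tauP_backward hΦ0 hadd hy h1.1 h1.2] at h4
          exact h2 ⟨h1.1, lt_inf_iff.2 ⟨h1.2, h4.trans_le hτt⟩⟩
      · rw [if_neg h1, if_neg fun h => h1 ⟨h.1, h.2.trans_le inf_le_left⟩]

/-! ### The identity on the outgoing boundary -/

/-- The outgoing identity, from a single application of the space-time formula to
`h(x,t) = w(x) 1[τ₀ < t + τ₊(x) < τ₀ + 1]`, where `t + τ₊(x)` is the instant at which the
space-time trajectory through `(x,t)` exits through the lateral boundary. -/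
lemma outgoing_identity (hΩ : IsOpen Ω) (μ : Measure (Fin N → ℝ)) [IsFiniteMeasureOnCompacts μ]
    (hinv : ∀ (A : Set (Fin N → ℝ)) (t : ℝ), MeasurableSet A →
      μ ((fun x => Φ x t) '' A) = μ A)
    (μp : Measure (Fin N → ℝ))
    (hΦ0 : ∀ x, Φ x 0 = x) (hadd : ∀ x a b, Φ (Φ x a) b = Φ x (a + b))
    (hc : Continuous (fun p : (Fin N → ℝ) × ℝ => Φ p.1 p.2))
    (hb : ∀ T : ℝ, 0 < T → ∀ f : ((Fin N → ℝ) × ℝ) → ℝ,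
      Integrable f ((μ.restrict Ω).prod (volume.restrict (Ioo (0 : ℝ) T))) →
      ∫ p, f p ∂((μ.restrict Ω).prod (volume.restrict (Ioo (0 : ℝ) T)))
        = (∫ t in Ioo (0 : ℝ) T, (∫ y in GammaP Ω Φ,
            (∫ s in Ioo (0 : ℝ) ((tauM Ω Φ y ⊓ ENNReal.ofReal t).toReal),
              f (Φ y (-s), t - s)) ∂μp))
          + ∫ x in Ω, (∫ s in Ioo (0 : ℝ) ((tauM Ω Φ x ⊓ ENNReal.ofReal T).toReal),
              f (Φ x (-s), T - s)) ∂μ)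
    (f : (Fin N → ℝ) → ℝ) (hf : Integrable f (μ.restrict Ω)) (τ₀ : ℝ) (hτ₀ : 0 < τ₀)
    (hsupp : ∀ x ∈ Ω \ ⋃₀ {U : Set (Fin N → ℝ) |
        IsOpen U ∧ U ⊆ Ω ∧ ∀ᵐ y ∂μ.restrict U, f y = 0},
      tauP Ω Φ x < ENNReal.ofReal τ₀) :
    ∫ x in Ω, f x ∂μ
      = ∫ y in GammaP Ω Φ, curveInt (fun s => f (Φ y (-s))) (tauM Ω Φ y) ∂μp := by
  classical
  obtain ⟨w, hwf, hwτ, hwI⟩ := exists_adapted μ hinv hΦ0 hadd hc f τ₀ hτ₀ hsupp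
  set C := ∫ y in GammaP Ω Φ, curveInt (fun s => f (Φ y (-s))) (tauM Ω Φ y) ∂μp with hC
  let B : Set ((Fin N → ℝ) × ℝ) := {p | ENNReal.ofReal p.2 + Ω.indicator (tauP Ω Φ) p.1 ∈
    Ioo (ENNReal.ofReal τ₀) (ENNReal.ofReal (τ₀ + 1))}
  have hB : MeasurableSet B :=
    ((ENNReal.measurable_ofReal.comp measurable_snd).add
      ((measurable_tauP hΩ hΦ0 hc).comp measurable_fst)) measurableSet_Ioo
  let h : (Fin N → ℝ) × ℝ → ℝ := B.indicator fun p => w p.1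
  have hw : Integrable w (μ.restrict Ω) := hf.congr hwf.symm
  have hh : Integrable h ((μ.restrict Ω).prod (volume.restrict (Ioo (0 : ℝ) (τ₀ + 1)))) :=
    (hw.comp_fst _).indicator hB
  have key := hb (τ₀ + 1) (by linarith) h hh
  -- On the left, each `x` with `w x ≠ 0` sees the cutoff for a time of length exactly `1`.
  have hL : ∫ p, h p ∂((μ.restrict Ω).prod (volume.restrict (Ioo (0 : ℝ) (τ₀ + 1))))
      = ∫ x in Ω, f x ∂μ := by
    rw [integral_prod _ hh, ← integral_congr_ae hwf]
    refine setIntegral_congr_fun hΩ.measurableSet fun x hx => ?_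
    by_cases hwx : w x = 0
    · simp [h, hwx, indicator]
    · have hτ := hwτ x hx hwx
      obtain ⟨a, ha0, ha⟩ : ∃ a : ℝ, 0 ≤ a ∧ tauP Ω Φ x = ENNReal.ofReal a :=
        ⟨_, ENNReal.toReal_nonneg,
          (ENNReal.ofReal_toReal (hτ.trans ENNReal.ofReal_lt_top).ne).symm⟩
      have haτ : a < τ₀ := by
        rw [ha] at hτ
        exact (ENNReal.ofReal_lt_ofReal_iff_of_nonneg ha0).1 hτ
      have hE : ∀ t ∈ Ioo (0 : ℝ) (τ₀ + 1), h (x, t)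
          = (Ioo (τ₀ - a) (τ₀ + 1 - a)).indicator (fun _ => w x) t := by
        intro t ht
        have : (x, t) ∈ B ↔ t ∈ Ioo (τ₀ - a) (τ₀ + 1 - a) := by
          simp only [B, Set.mem_ofPred_eq, indicator_of_mem hx, ha]
          rw [← ENNReal.ofReal_add ht.1.le ha0, mem_Ioo, mem_Ioo,
            ENNReal.ofReal_lt_ofReal_iff_of_nonneg hτ₀.le,
            ENNReal.ofReal_lt_ofReal_iff_of_nonneg (by linarith [ht.1])]
          constructor <;> rintro ⟨h1, h2⟩ <;> constructor <;> linarith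
        simp only [h, indicator_apply, this]
      rw [setIntegral_congr_fun measurableSet_Ioo hE, setIntegral_indicator measurableSet_Ioo,
        inter_eq_self_of_subset_right (Ioo_subset_Ioo (by linarith) (by linarith))]
      simp [Measure.real, show τ₀ + 1 - a - (τ₀ - a) = 1 by ring]
  -- The final-time term vanishes, as these trajectories exit no earlier than `τ₀ + 1`.
  have hR2 : ∫ x in Ω, (∫ s in Ioo (0 : ℝ)
      ((tauM Ω Φ x ⊓ ENNReal.ofReal (τ₀ + 1)).toReal), h (Φ x (-s), τ₀ + 1 - s)) ∂μ = 0 := by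
    have : ∀ x, (∫ s in Ioo (0 : ℝ)
        ((tauM Ω Φ x ⊓ ENNReal.ofReal (τ₀ + 1)).toReal), h (Φ x (-s), τ₀ + 1 - s)) = 0 := by
      intro x
      refine setIntegral_eq_zero_of_forall_eq_zero fun s hs => indicator_of_notMem ?_ _
      have hlt := (ENNReal.ofReal_lt_iff_lt_toReal hs.1.le
          (inf_le_right.trans_lt ENNReal.ofReal_lt_top).ne).2 hs.2
      have hM := hlt.trans_le inf_le_left
      have hs' : s < τ₀ + 1 := (ENNReal.ofReal_lt_ofReal_iff_of_nonneg hs.1.le).1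
        (hlt.trans_le inf_le_right)
      rintro ⟨-, h2⟩
      refine absurd h2 (not_lt.2 ?_)
      rw [indicator_of_mem (mem_of_lt_tauM hs.1 hM)]
      calc ENNReal.ofReal (τ₀ + 1) = ENNReal.ofReal (τ₀ + 1 - s) + ENNReal.ofReal s := by
            rw [← ENNReal.ofReal_add (by linarith) hs.1.le]; congr 1; ring
        _ ≤ _ := by gcongr; exact le_tauP_backward hadd hM
    simp [this]
  -- In the boundary term the cutoff depends on the exit time `t` alone.
  have hR1 : ∀ t ∈ Ioo (0 : ℝ) (τ₀ + 1), (∫ y in GammaP Ω Φ,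
      (∫ s in Ioo (0 : ℝ) ((tauM Ω Φ y ⊓ ENNReal.ofReal t).toReal),
        h (Φ y (-s), t - s)) ∂μp) = (Ioo τ₀ (τ₀ + 1)).indicator (fun _ => C) t := by
    intro t ht
    have hΓ : GammaP Ω Φ ⊆ Ωᶜ := fun y hy hyΩ => by
      have := hy.1
      rw [hΩ.frontier_eq] at this
      exact this.2 hyΩ
    have hin : ∀ y ∉ Ω, ∀ s ∈ Ioo (0 : ℝ) ((tauM Ω Φ y ⊓ ENNReal.ofReal t).toReal),
        h (Φ y (-s), t - s) = if τ₀ < t then w (Φ y (-s)) else 0 := by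
      intro y hy s hs
      have hlt := (ENNReal.ofReal_lt_iff_lt_toReal hs.1.le
          (inf_le_right.trans_lt ENNReal.ofReal_lt_top).ne).2 hs.2
      have hM := hlt.trans_le inf_le_left
      have hst : s < t := (ENNReal.ofReal_lt_ofReal_iff_of_nonneg hs.1.le).1
        (hlt.trans_le inf_le_right)
      have : (Φ y (-s), t - s) ∈ B ↔ τ₀ < t := by
        simp only [B, Set.mem_ofPred_eq, indicator_of_mem (mem_of_lt_tauM hs.1 hM),
          tauP_backward hΦ0 hadd hy hs.1 hM]
        rw [← ENNReal.ofReal_add (by linarith) hs.1.le, sub_add_cancel, mem_Ioo,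
          ENNReal.ofReal_lt_ofReal_iff_of_nonneg hτ₀.le,
          ENNReal.ofReal_lt_ofReal_iff_of_nonneg ht.1.le]
        exact ⟨fun h => h.1, fun h => ⟨h, ht.2⟩⟩
      simp only [h, indicator_apply, this]
    -- `GammaP` itself need not be known measurable: it suffices that it avoids `Ω`.
    have hae : ∀ᵐ y ∂μp.restrict (GammaP Ω Φ),
        (∫ s in Ioo (0 : ℝ) ((tauM Ω Φ y ⊓ ENNReal.ofReal t).toReal), h (Φ y (-s), t - s))
          = if τ₀ < t then curveInt (fun s => f (Φ y (-s))) (tauM Ω Φ y) else 0 := by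
      refine ae_restrict_of_ae_restrict_of_subset hΓ
        ((ae_restrict_iff' hΩ.measurableSet.compl).2 (Eventually.of_forall fun y hy => ?_))
      rw [setIntegral_congr_fun measurableSet_Ioo (hin y hy)]
      split_ifs with h1
      · exact hwI y hy t h1.le
      · simp
    rw [integral_congr_ae hae]
    by_cases h1 : τ₀ < t
    · simp [h1, ht.2, hC]
    · simp [h1]
  rw [hL, hR2, add_zero, setIntegral_congr_fun measurableSet_Ioo hR1,
    setIntegral_indicator measurableSet_Ioo,
    inter_eq_self_of_subset_right (Ioo_subset_Ioo hτ₀.le le_rfl)] at key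
  simpa [Measure.real] using key

end Core

/-! ### Both identities -/

theorem stmt_3
    {N : ℕ} (hN : 1 ≤ N) (κ : ℝ≥0) (hκ : 0 < κ)
    (F : (Fin N → ℝ) → (Fin N → ℝ)) (hF : LipschitzWith κ F)
    (Φ : (Fin N → ℝ) → ℝ → (Fin N → ℝ))
    (hΦ0 : ∀ x, Φ x 0 = x)
    (hΦ' : ∀ x s, HasDerivAt (Φ x) (F (Φ x s)) s)
    (Ω : Set (Fin N → ℝ)) (hΩ : IsOpen Ω)
    (μ : Measure (Fin N → ℝ)) [IsFiniteMeasureOnCompacts μ]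
    (hinv : ∀ (A : Set (Fin N → ℝ)) (t : ℝ), MeasurableSet A →
      μ ((fun x => Φ x t) '' A) = μ A)
    (μm μp : Measure (Fin N → ℝ))
    (hbeals : BealsProperty Ω Φ μ μm μp)
    (f : (Fin N → ℝ) → ℝ) (hf : Integrable f (μ.restrict Ω))
    (τ₀ : ℝ) (hτ₀ : 0 < τ₀)
    (hsupp : ∀ x ∈ Ω \ ⋃₀ {U : Set (Fin N → ℝ) |
        IsOpen U ∧ U ⊆ Ω ∧ ∀ᵐ y ∂μ.restrict U, f y = 0},
      tauP Ω Φ x < ENNReal.ofReal τ₀ ∧ tauM Ω Φ x < ENNReal.ofReal τ₀) :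
    (∫ x in Ω, f x ∂μ
        = ∫ y in GammaP Ω Φ, curveInt (fun s => f (Φ y (-s))) (tauM Ω Φ y) ∂μp) ∧
    (∫ x in Ω, f x ∂μ
        = ∫ y in GammaM Ω Φ, curveInt (fun s => f (Φ y s)) (tauP Ω Φ y) ∂μm) := by
  have hadd := flow_add κ F hF Φ hΦ0 hΦ'
  have hc := flow_continuous κ F hF Φ hΦ0 hΦ'
  refine ⟨outgoing_identity hΩ μ hinv μp hΦ0 hadd hc (fun T hT f hf => (hbeals T hT f hf).1)
    f hf τ₀ hτ₀ fun x hx => (hsupp x hx).1, ?_⟩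
  -- Time reversal exchanges the two boundaries.
  let Ψ : (Fin N → ℝ) → ℝ → (Fin N → ℝ) := fun x s => Φ x (-s)
  have hP : tauP Ω Ψ = tauM Ω Φ := rfl
  have hM : tauM Ω Ψ = tauP Ω Φ := by
    funext x
    simp only [tauM, tauP, Ψ, neg_neg]
  have hΓ : GammaP Ω Ψ = GammaM Ω Φ := rfl
  have hcΨ : Continuous (fun p : (Fin N → ℝ) × ℝ => Ψ p.1 p.2) :=
    hc.comp (continuous_fst.prodMk continuous_snd.neg)
  have hbΨ : ∀ T : ℝ, 0 < T → ∀ f : ((Fin N → ℝ) × ℝ) → ℝ,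
      Integrable f ((μ.restrict Ω).prod (volume.restrict (Ioo (0 : ℝ) T))) →
      ∫ p, f p ∂((μ.restrict Ω).prod (volume.restrict (Ioo (0 : ℝ) T)))
        = (∫ t in Ioo (0 : ℝ) T, (∫ y in GammaP Ω Ψ,
            (∫ s in Ioo (0 : ℝ) ((tauM Ω Ψ y ⊓ ENNReal.ofReal t).toReal),
              f (Ψ y (-s), t - s)) ∂μm))
          + ∫ x in Ω, (∫ s in Ioo (0 : ℝ) ((tauM Ω Ψ x ⊓ ENNReal.ofReal T).toReal),
              f (Ψ x (-s), T - s)) ∂μ := by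
    intro T hT g hg
    have hmp : MeasurePreserving (fun t : ℝ => T - t) (volume.restrict (Ioo 0 T))
        (volume.restrict (Ioo 0 T)) := by
      have := (Measure.measurePreserving_sub_left (volume : Measure ℝ) T).restrict_preimage
        (measurableSet_Ioo (a := 0) (b := T))
      simpa using this
    have hme : MeasurableEmbedding (fun t : ℝ => T - t) :=
      (MeasurableEquiv.subLeft T).measurableEmbedding
    have hmp2 := (MeasurePreserving.id (μ.restrict Ω)).prod hmp
    have hme2 : MeasurableEmbedding (Prod.map (id : (Fin N → ℝ) → _) (fun t : ℝ => T - t)) :=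
      MeasurableEmbedding.id.prodMap hme
    have key := (hbeals T hT _ ((hmp2.integrable_comp_emb hme2).2 hg)).2
    simp only [Function.comp_apply] at key
    rw [hmp2.integral_comp hme2] at key
    rw [key, hM, hΓ, ← hmp.integral_comp hme]
    have e1 : ∀ x : ℝ, T - (T - x) = x := fun x => by ring
    have e2 : ∀ x s : ℝ, T - (T - x + s) = x - s := fun x s => by ring
    simp only [Prod.map_apply, id_eq, Ψ, neg_neg, e1, e2]
  have := outgoing_identity hΩ μ (fun A t => hinv A (-t)) μm (by simpa [Ψ] using hΦ0)
    (fun x a b => by simp only [hadd]; congr 1; ring) hcΨ hbΨ f hf τ₀ hτ₀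
    fun x hx => (hsupp x hx).2
  rw [this, hM, hΓ]
  simp only [neg_neg]

end
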